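/- Let d, n₁, m₁ be positive integers with gcd(n₁, m₁) = 1, set n = d·n₁ and m = d·m₁, and assume n ≥ 2m. Consider f(X) = X^n + X^m + 1 ∈ ℤ[X]. If n₁ + m₁ ≢ 0 (mod 3), then f is irreducible in ℤ[X]. If n₁ + m₁ ≡ 0 (mod 3), then there exists g ∈ ℤ[X] such that f(X) = (X^{2d} + X^d + 1)·g and either g = 1 or g is irreducible in ℤ[X]. -/

import Mathlib

open Polynomial

/-- The combinatorial core of Ljunggren's argument: a unit trinomial is determined by
`p * p.mirror` up to sign and mirror. -/
theorem unitTrinomial_mirror_unique {p q : ℤ[X]} (hp : p.IsUnitTrinomial)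
    (hpq : p * p.mirror = q * q.mirror) :
    q = p ∨ q = -p ∨ q = p.mirror ∨ q = -p.mirror := by
  have hq : IsUnitTrinomial q := (isUnitTrinomial_iff'' hpq).mp hp
  obtain ⟨k, m, n, hkm, hmn, u, v, w, hp⟩ := hp
  obtain ⟨k', m', n', hkm', hmn', x, y, z, hq⟩ := hq
  have hk : k = k' := by
    rw [← mul_right_inj' (show 2 ≠ 0 from two_ne_zero), ←
      trinomial_natTrailingDegree hkm hmn u.ne_zero, ← hp, ← natTrailingDegree_mul_mirror, hpq,
      natTrailingDegree_mul_mirror, hq, trinomial_natTrailingDegree hkm' hmn' x.ne_zero]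
  have hn : n = n' := by
    rw [← mul_right_inj' (show 2 ≠ 0 from two_ne_zero), ← trinomial_natDegree hkm hmn w.ne_zero, ←
      hp, ← natDegree_mul_mirror, hpq, natDegree_mul_mirror, hq,
      trinomial_natDegree hkm' hmn' z.ne_zero]
  subst hk
  subst hn
  rcases eq_or_eq_neg_of_sq_eq_sq (y : ℤ) (v : ℤ)
      ((Int.isUnit_sq y.isUnit).trans (Int.isUnit_sq v.isUnit).symm) with
    (h1 | h1)
  · rw [h1] at hq
    rcases IsUnitTrinomial.irreducible_aux3 hkm hmn hkm' hmn' u v w x z hp hq hpq with (h2 | h2)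
    · exact Or.inl h2
    · exact Or.inr (Or.inr (Or.inl h2))
  · rw [h1] at hq
    rw [trinomial_def] at hp
    rw [← neg_inj, neg_add, neg_add, ← neg_mul, ← neg_mul, ← neg_mul, ← C_neg, ← C_neg, ← C_neg]
      at hp
    rw [← neg_mul_neg, ← mirror_neg] at hpq
    rcases IsUnitTrinomial.irreducible_aux3 hkm hmn hkm' hmn' (-u) (-v) (-w) x z hp hq hpq with
      (rfl | rfl)
    · exact Or.inr (Or.inl rfl)
    · exact Or.inr (Or.inr (Or.inr p.mirror_neg))

theorem trinomial_one_eq (n m : ℕ) :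
    (X : ℤ[X]) ^ n + X ^ m + 1 = trinomial 0 m n 1 1 1 := by
  simp [trinomial_def]; ring

theorem trinomial_one_isUnitTrinomial {n m : ℕ} (hm : 0 < m) (hmn : m < n) :
    IsUnitTrinomial ((X : ℤ[X]) ^ n + X ^ m + 1) :=
  ⟨0, m, n, hm, hmn, 1, 1, 1, by simp [trinomial_one_eq]⟩

theorem trinomial_one_mirror {n m : ℕ} (hm : 0 < m) (hmn : m < n) :
    ((X : ℤ[X]) ^ n + X ^ m + 1).mirror = X ^ n + X ^ (n - m) + 1 := by
  rw [trinomial_one_eq, trinomial_mirror hm hmn one_ne_zero one_ne_zero, trinomial_one_eq, add_zero]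

theorem trinomial_one_monic {n m : ℕ} (hm : 0 < m) (hmn : m < n) :
    ((X : ℤ[X]) ^ n + X ^ m + 1).Monic := by
  rw [trinomial_one_eq]; exact trinomial_monic hm hmn

/-- A common divisor of a monic polynomial and a nonzero constant is a unit. -/
theorem isUnit_of_dvd_monic_const {c f : ℤ[X]} (hf : f.Monic) (hcf : c ∣ f) {N : ℤ} (hN : N ≠ 0)
    (hcN : c ∣ C N) : IsUnit c := by
  have h0 : c.natDegree = 0 := by
    have := natDegree_le_of_dvd hcN (by simpa using hN)
    simpa using this
  have h1 : IsUnit c.leadingCoeff := by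
    have := leadingCoeff_dvd_leadingCoeff hcf
    rw [hf.leadingCoeff] at this
    exact isUnit_of_dvd_one this
  rw [eq_C_of_natDegree_eq_zero h0]
  rw [leadingCoeff, h0] at h1
  exact isUnit_C.mpr h1

section ring
variable {R : Type*} [CommRing R]

theorem ring_facts {x : R} {n m : ℕ} (hm : 0 < m) (hnm : 2 * m ≤ n)
    (h1 : x ^ n + x ^ m + 1 = 0) (h2 : x ^ n + x ^ (n - m) + 1 = 0) :
    IsUnit x ∧ x ^ n = (x ^ m) ^ 2 ∧ (x ^ m) ^ 2 + x ^ m + 1 = 0 := by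
  obtain ⟨e, rfl⟩ := Nat.exists_eq_add_of_le hnm
  have he : 2 * m + e - m = m + e := by omega
  rw [he] at h2
  have hu : IsUnit (x ^ m) := by
    refine IsUnit.of_mul_eq_one (-(x ^ (m + e) + 1)) ?_
    rw [pow_add] at h1 ⊢
    linear_combination (-1) * h1
  have hx : IsUnit x := (isUnit_pow_iff hm.ne').mp hu
  have h3 : x ^ e = 1 := by
    apply hu.mul_left_cancel
    rw [← pow_add]
    linear_combination h2 - h1
  have h4 : x ^ (2 * m + e) = (x ^ m) ^ 2 := by
    rw [pow_add, h3, mul_one, mul_comm, pow_mul]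
  exact ⟨hx, h4, by rw [← h4]; exact h1⟩

theorem ring_case {x : R} {d n₁ m₁ : ℕ} (hd : 0 < d) (hm₁ : 0 < m₁)
    (hcop : Nat.gcd n₁ m₁ = 1) (hnm : 2 * (d * m₁) ≤ d * n₁)
    (h1 : x ^ (d * n₁) + x ^ (d * m₁) + 1 = 0)
    (h2 : x ^ (d * n₁) + x ^ (d * n₁ - d * m₁) + 1 = 0) :
    ((n₁ + m₁) % 3 ≠ 0 → (3 : R) = 0) ∧
    ((n₁ + m₁) % 3 = 0 → x ^ (2 * d) + x ^ d + 1 = 0) := by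
  obtain ⟨-, h3, h4⟩ := ring_facts (Nat.mul_pos hd hm₁) hnm h1 h2
  have hm3 : x ^ (3 * (d * m₁)) = 1 := by
    rw [mul_comm, pow_mul]; linear_combination (x ^ (d * m₁) - 1) * h4
  have hn3 : x ^ (3 * (d * n₁)) = 1 := by
    rw [mul_comm, pow_mul, h3, ← pow_mul, ← pow_mul,
      show d * m₁ * (2 * 3) = (3 * (d * m₁)) * 2 by ring, pow_mul, hm3, one_pow]
  have hd3 : x ^ (3 * d) = 1 := by
    have := Nat.dvd_gcd (orderOf_dvd_of_pow_eq_one hn3) (orderOf_dvd_of_pow_eq_one hm3)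
    rw [Nat.gcd_mul_left, Nat.gcd_mul_left, hcop, mul_one] at this
    exact orderOf_dvd_iff_pow_eq_one.mp this
  rw [mul_comm, pow_mul] at hd3
  rw [mul_comm 2 d, pow_mul]
  rw [pow_mul, pow_mul] at h3
  rw [pow_mul] at h4
  generalize x ^ d = y at *
  have key : ∀ k, y ^ k = y ^ (k % 3) := fun k => pow_eq_pow_mod k hd3
  rw [key n₁, key m₁] at h3
  rw [key m₁] at h4
  have a : n₁ % 3 = 0 ∨ n₁ % 3 = 1 ∨ n₁ % 3 = 2 := by omega
  have b : m₁ % 3 = 0 ∨ m₁ % 3 = 1 ∨ m₁ % 3 = 2 := by omega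
  have hnot : ¬ (n₁ % 3 = 0 ∧ m₁ % 3 = 0) := by
    rintro ⟨p, q⟩
    have := Nat.dvd_gcd (Nat.dvd_of_mod_eq_zero p) (Nat.dvd_of_mod_eq_zero q)
    omega
  constructor
  · intro h
    rcases b with b | b | b
    · rw [b] at h4; linear_combination h4
    · rcases a with a | a | a
      · rw [a, b] at h3; rw [b] at h4
        have : y = 1 := by linear_combination hd3 + y * h3
        rw [this] at h4; linear_combination h4
      · rw [a, b] at h3; rw [b] at h4
        have : y = 1 := by linear_combination (-y ^ 2) * h3 + hd3 - y * hd3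
        rw [this] at h4; linear_combination h4
      · omega
    · rcases a with a | a | a
      · rw [a, b] at h3; rw [b] at h4
        have : y = 1 := by linear_combination (-1) * h3 - y * hd3
        rw [this] at h4; linear_combination h4
      · omega
      · rw [a, b] at h3; rw [b] at h4
        have : y = 1 := by linear_combination y ^ 2 * h3 - y * hd3 + (y ^ 3 + 1) * hd3
        rw [this] at h4; linear_combination h4
  · intro h
    rcases b with b | b | b
    · omega
    · rw [b] at h4; linear_combination h4
    · rw [b] at h4; linear_combination h4 - y * hd3

end ring

theorem common_dvd {c : ℤ[X]} {d n₁ m₁ : ℕ} (hd : 0 < d) (hm₁ : 0 < m₁)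
    (hcop : Nat.gcd n₁ m₁ = 1) (hnm : 2 * (d * m₁) ≤ d * n₁)
    (h1 : c ∣ X ^ (d * n₁) + X ^ (d * m₁) + 1)
    (h2 : c ∣ X ^ (d * n₁) + X ^ (d * n₁ - d * m₁) + 1) :
    ((n₁ + m₁) % 3 ≠ 0 → c ∣ C 3) ∧
    ((n₁ + m₁) % 3 = 0 → c ∣ X ^ (2 * d) + X ^ d + 1) := by
  have e : ∀ p : ℤ[X], c ∣ p ↔ Ideal.Quotient.mk (Ideal.span {c}) p = 0 := fun p => by
    rw [Ideal.Quotient.eq_zero_iff_mem, Ideal.mem_span_singleton]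
  rw [e] at h1 h2
  rw [e, e]
  simp only [map_add, map_pow, map_one] at h1 h2 ⊢
  have := ring_case hd hm₁ hcop hnm h1 h2
  have h3 : Ideal.Quotient.mk (Ideal.span {c}) (C 3) = 3 :=
    map_ofNat ((Ideal.Quotient.mk (Ideal.span {c})).comp C) 3
  rw [h3]
  exact this

/-- If `c` divides the trinomial, its mirror and `c ^ 2` divides the trinomial, `c` is a unit. -/
theorem double_isUnit {c : ℤ[X]} {n m : ℕ} (hm : 0 < m) (hnm : 2 * m ≤ n)
    (h1 : c * c ∣ X ^ n + X ^ m + 1) (h2 : c ∣ X ^ n + X ^ (n - m) + 1) : IsUnit c := by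
  have hcf : c ∣ X ^ n + X ^ m + 1 := (dvd_mul_right c c).trans h1
  have hder : c ∣ C (n : ℤ) * X ^ n + C (m : ℤ) * X ^ m := by
    obtain ⟨g, hg⟩ := h1
    have := congrArg (fun p => X * derivative p) hg
    simp only [derivative_add, derivative_X_pow, derivative_one, derivative_mul] at this
    obtain ⟨n', rfl⟩ : ∃ n', n = n' + 1 := ⟨n - 1, by omega⟩
    obtain ⟨m', rfl⟩ : ∃ m', m = m' + 1 := ⟨m - 1, by omega⟩
    simp only [Nat.add_sub_cancel] at this
    refine ⟨X * (2 * derivative c * g + c * derivative g), ?_⟩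
    simp only [map_natCast] at this ⊢
    linear_combination this
  have hN : ((m : ℤ) ^ 2 - n * m + n ^ 2) ≠ 0 := by
    have : (0 : ℤ) < m := by exact_mod_cast hm
    nlinarith [sq_nonneg ((m : ℤ) - 2 * n)]
  refine isUnit_of_dvd_monic_const (trinomial_one_monic hm (by omega)) hcf hN ?_
  have e : ∀ p : ℤ[X], c ∣ p ↔ Ideal.Quotient.mk (Ideal.span {c}) p = 0 := fun p => by
    rw [Ideal.Quotient.eq_zero_iff_mem, Ideal.mem_span_singleton]
  rw [e] at hcf h2 hder
  rw [e]
  simp only [map_add, map_pow, map_one, map_mul, map_natCast]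
    at hcf h2 hder
  simp only [map_add, map_sub, map_pow, map_mul, map_natCast]
  obtain ⟨hu, h3, h4⟩ := ring_facts hm hnm hcf h2
  rw [h3] at hder
  have hu' := hu.pow m
  generalize (Ideal.Quotient.mk (Ideal.span {c}) X) ^ m = z at *
  have h5 : (n : ℤ[X] ⧸ Ideal.span {c}) * z + m = 0 := by
    apply hu'.mul_left_cancel
    linear_combination hder
  linear_combination (n : ℤ[X] ⧸ Ideal.span {c}) ^ 2 * h4 +
    (m - n - (n : ℤ[X] ⧸ Ideal.span {c}) * z) * h5

theorem phi_dvd {d n₁ m₁ : ℕ} (hcop : Nat.gcd n₁ m₁ = 1) (h : (n₁ + m₁) % 3 = 0) :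
    (X : ℤ[X]) ^ (2 * d) + X ^ d + 1 ∣ X ^ (d * n₁) + X ^ (d * m₁) + 1 := by
  generalize hc : (X : ℤ[X]) ^ (2 * d) + X ^ d + 1 = c
  have h1 : c ∣ X ^ (2 * d) + X ^ d + 1 := hc ▸ dvd_rfl
  clear hc
  have e : ∀ p : ℤ[X], c ∣ p ↔ Ideal.Quotient.mk (Ideal.span {c}) p = 0 := fun p => by
    rw [Ideal.Quotient.eq_zero_iff_mem, Ideal.mem_span_singleton]
  rw [e] at h1 ⊢
  simp only [map_add, map_pow, map_one] at h1 ⊢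
  rw [mul_comm 2 d, pow_mul] at h1
  rw [pow_mul, pow_mul]
  generalize (Ideal.Quotient.mk (Ideal.span {c}) X) ^ d = y at *
  have h3 : y ^ 3 = 1 := by linear_combination (y - 1) * h1
  rw [pow_eq_pow_mod n₁ h3, pow_eq_pow_mod m₁ h3]
  have hnot : ¬ (n₁ % 3 = 0 ∧ m₁ % 3 = 0) := by
    rintro ⟨p, q⟩
    have := Nat.dvd_gcd (Nat.dvd_of_mod_eq_zero p) (Nat.dvd_of_mod_eq_zero q)
    omega
  have : (n₁ % 3 = 1 ∧ m₁ % 3 = 2) ∨ (n₁ % 3 = 2 ∧ m₁ % 3 = 1) := by omega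
  rcases this with ⟨a, b⟩ | ⟨a, b⟩ <;> rw [a, b] <;> linear_combination h1

/-- Ljunggren's theorem for `X^n + X^m + 1`. -/
theorem ljunggren_trinomial (d n₁ m₁ : ℕ) (hd : 0 < d) (hn₁ : 0 < n₁) (hm₁ : 0 < m₁)
    (hcop : Nat.gcd n₁ m₁ = 1) (n m : ℕ) (hn : n = d * n₁) (hm : m = d * m₁)
    (hnm : 2 * m ≤ n) :
    ((n₁ + m₁) % 3 ≠ 0 →
      Irreducible ((X : Polynomial ℤ) ^ n + X ^ m + 1)) ∧
    ((n₁ + m₁) % 3 = 0 →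
      ∃ g : Polynomial ℤ,
        (X : Polynomial ℤ) ^ n + X ^ m + 1 = (X ^ (2 * d) + X ^ d + 1) * g ∧
        (g = 1 ∨ Irreducible g)) := by
  subst hn hm
  have hmpos : 0 < d * m₁ := Nat.mul_pos hd hm₁
  have hlt : d * m₁ < d * n₁ := by omega
  have hT := trinomial_one_isUnitTrinomial hmpos hlt
  have hmir := trinomial_one_mirror hmpos hlt
  have hmon := trinomial_one_monic hmpos hlt
  constructor
  · intro h
    apply hT.irreducible_of_coprime
    intro c h1 h2
    rw [hmir] at h2
    exact isUnit_of_dvd_monic_const hmon h1 three_ne_zero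
      ((common_dvd hd hm₁ hcop hnm h1 h2).1 h)
  · intro h
    obtain ⟨g, hg⟩ := phi_dvd (d := d) hcop h
    refine ⟨g, hg, ?_⟩
    have hPmon : ((X : ℤ[X]) ^ (2 * d) + X ^ d + 1).Monic := trinomial_one_monic hd (by omega)
    have hPmir : ((X : ℤ[X]) ^ (2 * d) + X ^ d + 1).mirror = X ^ (2 * d) + X ^ d + 1 := by
      rw [trinomial_one_mirror hd (by omega), show 2 * d - d = d by omega]
    have hcommon := fun c h1 h2 => (common_dvd (c := c) hd hm₁ hcop hnm h1 h2).2 h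
    have hdouble := fun c => double_isUnit (c := c) hmpos hnm
    rw [← hmir] at hcommon
    simp only [← hmir] at hdouble
    generalize (X : ℤ[X]) ^ (d * n₁) + X ^ (d * m₁) + 1 = f at *
    generalize (X : ℤ[X]) ^ (2 * d) + X ^ d + 1 = P at *
    have hgmon : g.Monic := hPmon.of_mul_monic_left (hg ▸ hmon)
    have hP0 : P ≠ 0 := hPmon.ne_zero
    -- a self-mirror (up to sign) factor of `g` is a unit
    have hself : ∀ b : ℤ[X], b ∣ g → (b.mirror = b ∨ b.mirror = -b) → IsUnit b := by
      intro b hbg hb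
      have h1 : b ∣ f := hg ▸ hbg.mul_left P
      have h2 : b ∣ f.mirror := by
        obtain ⟨k, hk⟩ := h1
        rw [hk, mirror_mul_of_domain]
        rcases hb with hb | hb <;> rw [hb]
        · exact dvd_mul_right _ _
        · exact (dvd_neg.mpr dvd_rfl).trans (dvd_mul_right _ _)
      exact hdouble b (hg ▸ mul_dvd_mul (hcommon b h1 h2) hbg) h2
    by_cases hgu : IsUnit g
    · exact Or.inl (hgmon.eq_one_of_isUnit hgu)
    · refine Or.inr ⟨hgu, ?_⟩
      rintro a b rfl
      have hab0 := hgmon.ne_zero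
      have ha0 : a ≠ 0 := left_ne_zero_of_mul hab0
      have hb0 : b ≠ 0 := right_ne_zero_of_mul hab0
      have hfm : f.mirror = P * (a.mirror * b.mirror) := by
        rw [hg, mirror_mul_of_domain, mirror_mul_of_domain, hPmir]
      have hq : f * f.mirror = (P * (a * b.mirror)) * (P * (a * b.mirror)).mirror := by
        rw [hfm, mirror_mul_of_domain, mirror_mul_of_domain, hPmir, mirror_mirror, hg]
        ring
      have hbm0 : b.mirror ≠ 0 := mirror_eq_zero.not.mpr hb0
      rcases unitTrinomial_mirror_unique hT hq with h' | h' | h' | h'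
      · right
        apply hself b (dvd_mul_left b a) (Or.inl ?_)
        rw [hg] at h'
        exact mul_left_cancel₀ ha0 (mul_left_cancel₀ hP0 h')
      · right
        apply hself b (dvd_mul_left b a) (Or.inr ?_)
        rw [hg] at h'
        apply mul_left_cancel₀ ha0 (mul_left_cancel₀ hP0 _)
        linear_combination h'
      · left
        apply hself a (dvd_mul_right a b) (Or.inl ?_)
        rw [hfm] at h'
        exact (mul_right_cancel₀ hbm0 (mul_left_cancel₀ hP0 h')).symm
      · left
        apply hself a (dvd_mul_right a b) (Or.inr ?_)
        rw [hfm] at h'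
        apply mul_right_cancel₀ hbm0 (mul_left_cancel₀ hP0 _)
        linear_combination h'
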